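/- Let Z : ℕ → Bool and let z = Σ_{n∈ℕ} Z(n)·2^{−(n+1)} ∈ [0,1]. Assume Z is normal in the sense that for every k ≥ 1 and every string w : Fin k → Bool, the limiting frequency lim_{N→∞} (1/N)·|{i < N : Z(i+j) = w(j) for all j < k}| exists and equals 2^{−k}. Let C = [z,1] and for each n let r_n = 2^n · λ(I_n ∩ C), where I_n = [⌊2^n z⌋·2^{−n}, (⌊2^n z⌋+1)·2^{−n}] is the basic dyadic interval of length 2^{−n} containing z (so r_n = 1 − (2^n z − ⌊2^n z⌋)). Then liminf_{n→∞} r_n = 0 and limsup_{n→∞} r_n = 1; in particular the Lebesgue density of C at z does not exist and the lower Lebesgue density of C at z is strictly less than 1. -/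

import Mathlib

open MeasureTheory Filter

/-!
Write `T n = ∑ⱼ Z (n + j) 2^{-(j+1)}` for the number obtained from `z` by deleting its first `n`
binary digits, so that `T 0 = z` and `2 T n = Z n + T (n + 1)`. By normality every finite word
occurs in `Z` infinitely often (`exists_word_ge`): a word occurring only finitely often has
frequency `0`. In particular `Z` is not eventually constantly `1`, so
`0 ≤ T n < 1`; as `2ⁿ z - T n` is an integer, `T n` is the fractional part of `2ⁿ z`, and the
density ratio is `r n = 1 - T n`. A block of `k` zeros at position `n` forces `T n ≤ 2^{-k}`, and a
block of `k` ones forces `1 - T n ≤ 2^{-k}`; both happen for arbitrarily large `n`, which gives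
`limsup r = 1` and `liminf r = 0`.

For the density along all open intervals around `z` it suffices that `z < 1`: the interval
`(z - s, z + t)` with `s, t > 0` small meets `[z, 1]` in measure `t`, so the ratio `t / (s + t)`
can be given the values `1 / 2` and `3 / 4` at arbitrarily small scales.
-/

namespace DyadicDensity

/-- The real number whose binary digits are `Z n, Z (n + 1), …`. -/
noncomputable def tail (Z : ℕ → Bool) (n : ℕ) : ℝ :=
  ∑' j : ℕ, (if Z (n + j) then (1:ℝ) else 0) * (2:ℝ)⁻¹ ^ (j + 1)

lemma hasSum_half : HasSum (fun j : ℕ => (2:ℝ)⁻¹ ^ (j + 1)) 1 := by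
  have h := (hasSum_geometric_of_lt_one (r := (2:ℝ)⁻¹) (by norm_num) (by norm_num)).mul_right
    ((2:ℝ)⁻¹)
  simp only [← pow_succ] at h
  rwa [show ((1 - 2⁻¹)⁻¹ * 2⁻¹ : ℝ) = 1 by norm_num] at h

lemma digit_bounds (b : Bool) (j : ℕ) :
    0 ≤ (if b then (1:ℝ) else 0) * (2:ℝ)⁻¹ ^ (j + 1) ∧
      (if b then (1:ℝ) else 0) * (2:ℝ)⁻¹ ^ (j + 1) ≤ (2:ℝ)⁻¹ ^ (j + 1) := by
  cases b <;> simp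

lemma summable_tail (Z : ℕ → Bool) (n : ℕ) :
    Summable (fun j : ℕ => (if Z (n + j) then (1:ℝ) else 0) * (2:ℝ)⁻¹ ^ (j + 1)) :=
  Summable.of_nonneg_of_le (fun j => (digit_bounds _ j).1) (fun j => (digit_bounds _ j).2)
    hasSum_half.summable

lemma tail_nonneg (Z : ℕ → Bool) (n : ℕ) : 0 ≤ tail Z n :=
  tsum_nonneg fun j => (digit_bounds _ j).1

lemma tail_le_one (Z : ℕ → Bool) (n : ℕ) : tail Z n ≤ 1 := by
  rw [← hasSum_half.tsum_eq]
  exact (summable_tail Z n).tsum_le_tsum (fun j => (digit_bounds _ j).2) hasSum_half.summable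

/-- Splitting off the first digit. -/
lemma tail_step (Z : ℕ → Bool) (n : ℕ) :
    2 * tail Z n = (if Z n then (1:ℝ) else 0) + tail Z (n + 1) := by
  have h := (summable_tail Z n).tsum_eq_zero_add
  have h2 : ∑' j : ℕ, (if Z (n + (j + 1)) then (1:ℝ) else 0) * (2:ℝ)⁻¹ ^ (j + 1 + 1)
      = tail Z (n + 1) * 2⁻¹ := by
    rw [tail, ← tsum_mul_right]
    refine tsum_congr fun j => ?_
    rw [show n + (j + 1) = n + 1 + j by ring]
    ring
  rw [h2] at h
  simp only [add_zero, zero_add, pow_one] at h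
  rw [tail, h]
  ring

/-- A block of `k` zeros at position `n` makes the tail at most `2^{-k}`. -/
lemma tail_le_of_zeros (Z : ℕ → Bool) (k : ℕ) : ∀ n, (∀ j < k, Z (n + j) = false) →
    tail Z n ≤ (2:ℝ)⁻¹ ^ k := by
  induction k with
  | zero => intro n _; simpa using tail_le_one Z n
  | succ k ih =>
    intro n h
    have h0 := h 0 (by omega)
    have h1 := ih (n + 1) fun j hj => by
      rw [show n + 1 + j = n + (j + 1) by ring]; exact h _ (by omega)
    have h2 := tail_step Z n
    simp only [add_zero] at h0
    simp only [h0, Bool.false_eq_true, if_false] at h2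
    rw [pow_succ]
    linarith

/-- A block of `k` ones at position `n` makes the tail at least `1 - 2^{-k}`. -/
lemma le_tail_of_ones (Z : ℕ → Bool) (k : ℕ) : ∀ n, (∀ j < k, Z (n + j) = true) →
    1 - (2:ℝ)⁻¹ ^ k ≤ tail Z n := by
  induction k with
  | zero => intro n _; simpa using tail_nonneg Z n
  | succ k ih =>
    intro n h
    have h0 := h 0 (by omega)
    have h1 := ih (n + 1) fun j hj => by
      rw [show n + 1 + j = n + (j + 1) by ring]; exact h _ (by omega)
    have h2 := tail_step Z n
    simp only [add_zero] at h0
    simp only [h0, if_true] at h2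
    rw [pow_succ]
    linarith

/-- A zero digit at or after position `n` keeps the tail below `1`. -/
lemma tail_lt_one_of_zero (Z : ℕ → Bool) (d : ℕ) : ∀ n, Z (n + d) = false → tail Z n < 1 := by
  induction d with
  | zero =>
    intro n h
    have h2 := tail_step Z n
    simp only [add_zero] at h
    simp only [h, Bool.false_eq_true, if_false] at h2
    linarith [tail_le_one Z (n + 1)]
  | succ d ih =>
    intro n h
    have h1 := ih (n + 1) (by rw [show n + 1 + d = n + (d + 1) by ring]; exact h)
    have h2 := tail_step Z n
    split_ifs at h2 <;> linarith

lemma two_pow_mul_tail (Z : ℕ → Bool) (n : ℕ) :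
    ∃ m : ℤ, (2:ℝ) ^ n * tail Z 0 = m + tail Z n := by
  induction n with
  | zero => exact ⟨0, by simp⟩
  | succ n ih =>
    obtain ⟨m, hm⟩ := ih
    have h2 := tail_step Z n
    refine ⟨2 * m + (if Z n then 1 else 0), ?_⟩
    rw [pow_succ, mul_right_comm, hm]
    push_cast
    linarith

/-- A word whose limiting frequency is positive occurs at arbitrarily large positions. -/
lemma exists_word_ge (Z : ℕ → Bool) (k : ℕ) (w : Fin k → Bool)
    (h : Tendsto (fun N : ℕ =>
          (((Finset.range N).filter (fun i => ∀ j : Fin k, Z (i + (j : ℕ)) = w j)).card : ℝ) / N)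
        atTop (nhds ((2:ℝ)⁻¹ ^ k))) (M : ℕ) :
    ∃ n ≥ M, ∀ j : Fin k, Z (n + (j : ℕ)) = w j := by
  by_contra! hM
  have h0 : Tendsto (fun N : ℕ =>
      (((Finset.range N).filter (fun i => ∀ j : Fin k, Z (i + (j : ℕ)) = w j)).card : ℝ) / N)
        atTop (nhds 0) := by
    refine squeeze_zero (fun N => by positivity) (fun N => ?_)
      (tendsto_const_div_atTop_nhds_zero_nat (M : ℝ))
    gcongr
    rw [← Finset.card_range M]
    refine Finset.card_le_card fun i hi => ?_
    rw [Finset.mem_filter] at hi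
    rw [Finset.mem_range]
    by_contra! hi'
    obtain ⟨j, hj⟩ := hM i hi'
    exact hj (hi.2 j)
  exact (by positivity : (2:ℝ)⁻¹ ^ k ≠ 0) (tendsto_nhds_unique h h0)

lemma volume_Ioo_inter (z s t : ℝ) (hs : 0 < s) (ht : 0 < t) (h1 : z + t ≤ 1) :
    (volume (Set.Ioo (z - s) (z + t) ∩ Set.Icc z 1)).toReal = t := by
  have : Set.Ioo (z - s) (z + t) ∩ Set.Icc z 1 = Set.Ico z (z + t) := by
    ext x
    simp only [Set.mem_inter_iff, Set.mem_Ioo, Set.mem_Icc, Set.mem_Ico]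
    constructor
    · rintro ⟨⟨_, h⟩, h', _⟩; exact ⟨h', h⟩
    · rintro ⟨h, h'⟩; exact ⟨⟨by linarith, h'⟩, h, by linarith⟩
  rw [this, Real.volume_Ico, add_sub_cancel_left, ENNReal.toReal_ofReal ht.le]

/-- The density ratio in the dyadic interval at level `n` is `1 - {2ⁿ z}`. -/
lemma ratio_eq (z : ℝ) (h1 : z < 1) (n : ℕ) :
    2 ^ n * (volume (Set.Icc ((⌊(2:ℝ) ^ n * z⌋ : ℝ) / 2 ^ n) (((⌊(2:ℝ) ^ n * z⌋ : ℝ) + 1) / 2 ^ n)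
        ∩ Set.Icc z 1)).toReal = 1 - Int.fract ((2:ℝ) ^ n * z) := by
  have hp : (0:ℝ) < 2 ^ n := by positivity
  have hfl := Int.floor_le ((2:ℝ) ^ n * z)
  have hlt := Int.lt_floor_add_one ((2:ℝ) ^ n * z)
  have ha : (⌊(2:ℝ) ^ n * z⌋ : ℝ) / 2 ^ n ≤ z := by
    rw [div_le_iff₀ hp]; linarith
  have hb : ((⌊(2:ℝ) ^ n * z⌋ : ℝ) + 1) / 2 ^ n ≤ 1 := by
    rw [div_le_one hp]
    have : ⌊(2:ℝ) ^ n * z⌋ < (2:ℤ) ^ n := by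
      rw [Int.floor_lt]
      push_cast
      nlinarith
    exact_mod_cast this
  have hzb : z ≤ ((⌊(2:ℝ) ^ n * z⌋ : ℝ) + 1) / 2 ^ n := by
    rw [le_div_iff₀ hp]; linarith
  rw [Set.Icc_inter_Icc, max_eq_right ha, min_eq_left hb, Real.volume_Icc,
    ENNReal.toReal_ofReal (by linarith), Int.fract]
  field_simp
  ring

/-- The last two claims hold at the left end point of any nondegenerate interval `[z, 1]`. -/
lemma density_fails (z : ℝ) (h1 : z < 1) :
    (∃ ε : ℝ, 0 < ε ∧ ∀ δ : ℝ, 0 < δ → ∃ a b : ℝ, a < z ∧ z < b ∧ b - a < δ ∧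
      (volume (Set.Ioo a b ∩ Set.Icc z 1)).toReal / (b - a) < 1 - ε) ∧
    ¬ ∃ L : ℝ, ∀ ε : ℝ, 0 < ε → ∃ δ : ℝ, 0 < δ ∧ ∀ a b : ℝ, a < z → z < b → b - a < δ →
      |(volume (Set.Ioo a b ∩ Set.Icc z 1)).toReal / (b - a) - L| < ε := by
  constructor
  · refine ⟨1 / 4, by norm_num, fun δ hδ => ?_⟩
    obtain ⟨t, ht, htm⟩ := exists_between (lt_min (half_pos hδ) (sub_pos.2 h1))
    obtain ⟨ht1, ht2⟩ := lt_min_iff.1 htm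
    refine ⟨z - t, z + t, by linarith, by linarith, by linarith, ?_⟩
    rw [volume_Ioo_inter z t t ht ht (by linarith), div_lt_iff₀ (by linarith)]
    linarith
  · rintro ⟨L, hL⟩
    obtain ⟨δ, hδ, h⟩ := hL (1 / 8) (by norm_num)
    obtain ⟨t, ht, htm⟩ := exists_between
      (lt_min (div_pos hδ (by norm_num : (0:ℝ) < 4)) (div_pos (sub_pos.2 h1)
        (by norm_num : (0:ℝ) < 3)))
    obtain ⟨ht1, ht2⟩ := lt_min_iff.1 htm
    have e1 := h (z - t) (z + t) (by linarith) (by linarith) (by linarith)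
    have e2 := h (z - t) (z + 3 * t) (by linarith) (by linarith) (by linarith)
    rw [volume_Ioo_inter z t t ht ht (by linarith),
      show t / (z + t - (z - t)) = 1 / 2 by rw [div_eq_div_iff (by linarith) two_ne_zero]; ring,
      abs_lt] at e1
    rw [volume_Ioo_inter z t (3 * t) ht (by linarith) (by linarith),
      show 3 * t / (z + 3 * t - (z - t)) = 3 / 4 by
        rw [div_eq_div_iff (by linarith) four_ne_zero]; ring,
      abs_lt] at e2
    linarith [e1.1, e1.2, e2.1, e2.2]

lemma liminf_eq_zero (r : ℕ → ℝ) (h0 : ∀ n, 0 ≤ r n) (h1 : ∀ n, r n ≤ 1)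
    (h : ∀ ε > 0, ∀ M : ℕ, ∃ n ≥ M, r n ≤ ε) : liminf r atTop = 0 := by
  have hb : IsBoundedUnder (· ≥ ·) atTop r := isBoundedUnder_of ⟨0, h0⟩
  have hc : IsCoboundedUnder (· ≥ ·) atTop r :=
    (isBoundedUnder_of ⟨1, h1⟩ : IsBoundedUnder (· ≤ ·) atTop r).isCoboundedUnder_ge
  apply le_antisymm
  · refine le_of_forall_pos_le_add fun ε hε => ?_
    rw [zero_add]
    exact liminf_le_of_frequently_le (frequently_atTop.2 (h ε hε)) hb
  · exact le_liminf_of_le hc (Eventually.of_forall h0)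

lemma limsup_eq_one (r : ℕ → ℝ) (h0 : ∀ n, 0 ≤ r n) (h1 : ∀ n, r n ≤ 1)
    (h : ∀ ε > 0, ∀ M : ℕ, ∃ n ≥ M, 1 - ε ≤ r n) : limsup r atTop = 1 := by
  have hb : IsBoundedUnder (· ≤ ·) atTop r := isBoundedUnder_of ⟨1, h1⟩
  have hc : IsCoboundedUnder (· ≤ ·) atTop r :=
    (isBoundedUnder_of ⟨0, h0⟩ : IsBoundedUnder (· ≥ ·) atTop r).isCoboundedUnder_le
  apply le_antisymm
  · exact limsup_le_of_le hc (Eventually.of_forall h1)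
  · refine le_of_forall_pos_le_add fun ε hε => ?_
    rw [← sub_le_iff_le_add]
    exact le_limsup_of_frequently_le (frequently_atTop.2 (h ε hε)) hb

end DyadicDensity

open DyadicDensity

/-- A normal real `z ∈ [0,1]` with binary expansion `Z`, and `C = [z,1]`: the dyadic
density ratios `r n = 2ⁿ · λ(Iₙ ∩ C)` (where `Iₙ` is the basic dyadic interval of
length `2⁻ⁿ` containing `z`) satisfy `liminf r = 0` and `limsup r = 1`; in particular
the lower Lebesgue density of `C` at `z` is `< 1` and the Lebesgue density of `C`
at `z` does not exist. -/
theorem dyadic_density_oscillation_of_normal (Z : ℕ → Bool) (z : ℝ)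
    (hz : z = ∑' n : ℕ, (if Z n then (1:ℝ) else 0) * (2:ℝ)⁻¹ ^ (n + 1))
    (hnormal : ∀ k : ℕ, 1 ≤ k → ∀ w : Fin k → Bool,
      Tendsto (fun N : ℕ =>
          (((Finset.range N).filter (fun i => ∀ j : Fin k, Z (i + (j : ℕ)) = w j)).card : ℝ) / N)
        atTop (nhds ((2:ℝ)⁻¹ ^ k)))
    (C : Set ℝ) (hC : C = Set.Icc z 1)
    (r : ℕ → ℝ)
    (hr : ∀ n : ℕ, r n = 2 ^ n *
      (volume (Set.Icc ((⌊(2:ℝ) ^ n * z⌋ : ℝ) / 2 ^ n) (((⌊(2:ℝ) ^ n * z⌋ : ℝ) + 1) / 2 ^ n)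
        ∩ C)).toReal) :
    liminf r atTop = 0 ∧ limsup r atTop = 1 ∧
    (∃ ε : ℝ, 0 < ε ∧ ∀ δ : ℝ, 0 < δ → ∃ a b : ℝ, a < z ∧ z < b ∧ b - a < δ ∧
      (volume (Set.Ioo a b ∩ C)).toReal / (b - a) < 1 - ε) ∧
    ¬ ∃ L : ℝ, ∀ ε : ℝ, 0 < ε → ∃ δ : ℝ, 0 < δ ∧ ∀ a b : ℝ, a < z → z < b → b - a < δ →
      |(volume (Set.Ioo a b ∩ C)).toReal / (b - a) - L| < ε := by
  have hz0 : z = tail Z 0 := by simpa [tail] using hz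
  have block : ∀ (b : Bool) (k M : ℕ), ∃ n ≥ M, ∀ j < k + 1, Z (n + j) = b := fun b k M => by
    obtain ⟨n, hn, hw⟩ := exists_word_ge Z (k + 1) (fun _ => b)
      (hnormal (k + 1) (by omega) fun _ => b) M
    exact ⟨n, hn, fun j hj => hw ⟨j, hj⟩⟩
  have hlt : ∀ n, tail Z n < 1 := fun n => by
    obtain ⟨m, hm, h⟩ := block false 0 n
    refine tail_lt_one_of_zero Z (m - n) n ?_
    rw [Nat.add_sub_cancel' hm]
    exact h 0 (by omega)
  have hz1 : z < 1 := hz0 ▸ hlt 0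
  subst hC
  have hrn : ∀ n, r n = 1 - tail Z n := fun n => by
    rw [hr, ratio_eq z hz1]
    obtain ⟨m, hm⟩ := two_pow_mul_tail Z n
    rw [hz0, hm, Int.fract_intCast_add, Int.fract_eq_self.2 ⟨tail_nonneg Z n, hlt n⟩]
  have hr0 : ∀ n, 0 ≤ r n := fun n => by rw [hrn]; linarith [hlt n]
  have hr1 : ∀ n, r n ≤ 1 := fun n => by rw [hrn]; linarith [tail_nonneg Z n]
  have small : ∀ ε > (0:ℝ), ∃ k : ℕ, (2:ℝ)⁻¹ ^ (k + 1) ≤ ε := fun ε hε => by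
    obtain ⟨k, hk⟩ := exists_pow_lt_of_lt_one hε (by norm_num : (2:ℝ)⁻¹ < 1)
    exact ⟨k, (pow_le_pow_of_le_one (by norm_num) (by norm_num) (Nat.le_succ k)).trans hk.le⟩
  refine ⟨liminf_eq_zero r hr0 hr1 fun ε hε M => ?_, limsup_eq_one r hr0 hr1 fun ε hε M => ?_,
    density_fails z hz1⟩
  · obtain ⟨k, hk⟩ := small ε hε
    obtain ⟨n, hn, h⟩ := block true k M
    exact ⟨n, hn, by rw [hrn]; linarith [le_tail_of_ones Z (k + 1) n h]⟩
  · obtain ⟨k, hk⟩ := small ε hε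
    obtain ⟨n, hn, h⟩ := block false k M
    exact ⟨n, hn, by rw [hrn]; linarith [tail_le_of_zeros Z (k + 1) n h]⟩
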